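/- For every λ > 2 l_{f,1}/μ_g, the map x ↦ y*_λ(x) is differentiable and its derivative is Lipschitz: for all x₁, x₂ ∈ ℝ^{d_x}, ‖∇y*_λ(x₁) − ∇y*_λ(x₂)‖ ≤ l_{λ,1} ‖x₁ − x₂‖ with l_{λ,1} ≤ 32 (l_{g,2} + l_{f,2}/λ) l_{g,1}²/μ_g³. -/

import Mathlib

open Set

noncomputable section

/-!
For a fixed multiplier `λ` the term `λ g*(x)` does not depend on `y`, so `y*_λ(x)` minimizes
`h (x, ·)` with `h = f + λ g`, i.e. it solves `∂_y h (x, y*_λ(x)) = 0`. The map `∂_y h (x, ·)` is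
strongly monotone with modulus `m = λ μ_g / 2`, hence expands distances by `m` and has a coercive,
so (Lax–Milgram) invertible, derivative; the implicit function theorem makes `y*_λ` differentiable.
Expansion also makes `y*_λ` Lipschitz with some constant `K ≤ 3 l_{g,1} / μ_g`, and subtracting the
equations `∂_x∂_y h + ∂_y∂_y h ∘ ∇y*_λ = 0` at two points bounds the variation of `∇y*_λ` by
`m⁻¹ (l_{f,2} + λ l_{g,2}) max(1, K)²`.
-/

open Filter Topology ContinuousLinearMap
open scoped NNReal

section PartialDerivative

variable {𝕜 : Type*} [NontriviallyNormedField 𝕜]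
  {X Y Z : Type*} [NormedAddCommGroup X] [NormedSpace 𝕜 X] [NormedAddCommGroup Y] [NormedSpace 𝕜 Y]
  [NormedAddCommGroup Z] [NormedSpace 𝕜 Z]

variable (𝕜 X Y Z) in
/-- Restriction of continuous linear maps on `X × Y` to the second factor, as a continuous linear
map `φ ↦ φ ∘ inr` between operator spaces, so that it can be composed with a derivative. -/
def restrictSnd : (X × Y →L[𝕜] Z) →L[𝕜] Y →L[𝕜] Z :=
  (compL 𝕜 Y (X × Y) Z).flip (inr 𝕜 X Y)

variable (𝕜) in
/-- The partial derivative `∂_y F` of a map `F (x, y)` with respect to its second variable, as the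
restriction of the total derivative; it is meaningful only where `F` is differentiable. -/
def fderivSnd (F : X × Y → Z) (p : X × Y) : Y →L[𝕜] Z :=
  restrictSnd 𝕜 X Y Z (fderiv 𝕜 F p)

variable {F G : X × Y → Z} {K : ℝ≥0}

theorem hasFDerivAt_fderivSnd {x : X} {y : Y} (hF : DifferentiableAt 𝕜 F (x, y)) :
    HasFDerivAt (fun y => F (x, y)) (fderivSnd 𝕜 F (x, y)) y :=
  hF.hasFDerivAt.comp y (hasFDerivAt_prodMk_right x y)

theorem fderivSnd_add_const_smul (hF : Differentiable 𝕜 F) (hG : Differentiable 𝕜 G) (c : 𝕜) :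
    fderivSnd 𝕜 (F + c • G) = fderivSnd 𝕜 F + c • fderivSnd 𝕜 G := by
  ext1 p
  simp [fderivSnd, fderiv_add (hF p) ((hG p).const_smul c), fderiv_const_smul (hG p)]

theorem norm_restrictSnd_le_one : ‖restrictSnd 𝕜 X Y Z‖ ≤ 1 := by
  refine opNorm_le_bound _ zero_le_one fun φ => ?_
  calc ‖φ ∘L inr 𝕜 X Y‖ ≤ ‖φ‖ * ‖inr 𝕜 X Y‖ := opNorm_comp_le _ _
    _ ≤ ‖φ‖ * 1 := by gcongr; exact norm_inr_le_one 𝕜 X Y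
    _ = 1 * ‖φ‖ := mul_comm _ _

theorem lipschitzWith_fderivSnd (hF : LipschitzWith K (fderiv 𝕜 F)) :
    LipschitzWith K (fderivSnd 𝕜 F) :=
  ((restrictSnd 𝕜 X Y Z).lipschitz.comp hF).weaken
    (mul_le_of_le_one_left' norm_restrictSnd_le_one)

theorem contDiff_fderivSnd {n : WithTop ℕ∞} (hF : ContDiff 𝕜 (n + 1) F) :
    ContDiff 𝕜 n (fderivSnd 𝕜 F) :=
  (restrictSnd 𝕜 X Y Z).contDiff.comp (hF.fderiv_right le_rfl)

theorem lipschitzWith_fderiv_fderivSnd (hF : Differentiable 𝕜 (fderiv 𝕜 F))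
    (hK : LipschitzWith K (fderiv 𝕜 (fderiv 𝕜 F))) :
    LipschitzWith K (fderiv 𝕜 (fderivSnd 𝕜 F)) := by
  have hfderiv : ∀ p, fderiv 𝕜 (fderivSnd 𝕜 F) p =
      restrictSnd 𝕜 X Y Z ∘L fderiv 𝕜 (fderiv 𝕜 F) p := fun p =>
    ((restrictSnd 𝕜 X Y Z).hasFDerivAt.comp p (hF p).hasFDerivAt).fderiv
  refine lipschitzWith_iff_norm_sub_le.2 fun p q => ?_
  rw [hfderiv, hfderiv, ← comp_sub]
  calc ‖restrictSnd 𝕜 X Y Z ∘L (fderiv 𝕜 (fderiv 𝕜 F) p - fderiv 𝕜 (fderiv 𝕜 F) q)‖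
      ≤ ‖restrictSnd 𝕜 X Y Z‖ * ‖fderiv 𝕜 (fderiv 𝕜 F) p - fderiv 𝕜 (fderiv 𝕜 F) q‖ :=
        opNorm_comp_le _ _
    _ ≤ 1 * (K * ‖p - q‖) := by
        gcongr
        · exact norm_restrictSnd_le_one
        · exact lipschitzWith_iff_norm_sub_le.1 hK p q
    _ = K * ‖p - q‖ := one_mul _

end PartialDerivative

section LinearCombination

variable {𝕜 : Type*} [NontriviallyNormedField 𝕜]
  {E G : Type*} [NormedAddCommGroup E] [NormedSpace 𝕜 E] [NormedAddCommGroup G] [NormedSpace 𝕜 G]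
  {f g : E → G}

theorem fderiv_add_const_smul (hf : Differentiable 𝕜 f) (hg : Differentiable 𝕜 g) (c : 𝕜) :
    fderiv 𝕜 (f + c • g) = fderiv 𝕜 f + c • fderiv 𝕜 g := by
  ext1 x
  simp [fderiv_add (hf x) ((hg x).const_smul c), fderiv_const_smul (hg x)]

theorem lipschitzWith_fderiv_add_const_smul {Kf Kg : ℝ≥0} (hf : Differentiable 𝕜 f)
    (hg : Differentiable 𝕜 g) (hKf : LipschitzWith Kf (fderiv 𝕜 f))
    (hKg : LipschitzWith Kg (fderiv 𝕜 g)) (c : 𝕜) :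
    LipschitzWith (Kf + ‖c‖₊ * Kg) (fderiv 𝕜 (f + c • g)) := by
  rw [fderiv_add_const_smul hf hg]
  exact hKf.add ((lipschitzWith_smul c).comp hKg)

end LinearCombination

section ImplicitFunction

variable {𝕜 : Type*} [NontriviallyNormedField 𝕜]
  {X Y Z : Type*} [NormedAddCommGroup X] [NormedSpace 𝕜 X] [NormedAddCommGroup Y] [NormedSpace 𝕜 Y]
  [NormedAddCommGroup Z] [NormedSpace 𝕜 Z]

theorem lipschitzWith_of_apply_eq_const {α β γ : Type*} [PseudoEMetricSpace α]
    [PseudoEMetricSpace β] [PseudoEMetricSpace γ] {F : α × β → γ} {η : α → β} {c L : ℝ≥0} {z : γ}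
    (hF : ∀ x, AntilipschitzWith c fun y => F (x, y)) (hL : LipschitzWith L F)
    (hη : ∀ x, F (x, η x) = z) : LipschitzWith (c * L) η := fun x x' =>
  calc edist (η x) (η x') ≤ c * edist (F (x, η x)) (F (x, η x')) := hF x _ _
    _ = c * edist (F (x', η x')) (F (x, η x')) := by rw [hη, hη]
    _ ≤ c * (L * edist x x') := by
        gcongr
        simpa [Prod.edist_eq, edist_comm] using hL (x', η x') (x, η x')
    _ = ↑(c * L) * edist x x' := by rw [ENNReal.coe_mul, mul_assoc]

theorem antilipschitzWith_of_hasFDerivAt {f : Y → Z} {f' : Y →L[𝕜] Z} {y : Y} {c : ℝ≥0}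
    (hf : AntilipschitzWith c f) (hf' : HasFDerivAt f f' y) : AntilipschitzWith c f' := by
  refine f'.antilipschitz_of_bound fun v => ?_
  have hlim : Tendsto (fun t : 𝕜 => t • (f (y + t⁻¹ • v) - f y)) (Bornology.cobounded 𝕜)
      (𝓝 (f' v)) := hf'.lim v tendsto_norm_cobounded_atTop
  refine ge_of_tendsto (hlim.norm.const_mul (c : ℝ)) ?_
  filter_upwards [Bornology.eventually_ne_cobounded (0 : 𝕜)] with t ht
  calc ‖v‖ = ‖t‖ * dist (y + t⁻¹ • v) y := by
        rw [dist_eq_norm, add_sub_cancel_left, ← norm_smul, smul_inv_smul₀ ht]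
    _ ≤ ‖t‖ * (c * dist (f (y + t⁻¹ • v)) (f y)) := by gcongr; exact hf.le_mul_dist _ _
    _ = c * ‖t • (f (y + t⁻¹ • v) - f y)‖ := by rw [dist_eq_norm, norm_smul]; ring

theorem differentiableAt_of_apply_eq_const [CompleteSpace X] [CompleteSpace Y] [CompleteSpace Z]
    {F : X × Y → Z} {F' : X × Y →L[𝕜] Z} {η : X → Y} {z : Z} {x : X}
    (hF : HasStrictFDerivAt F F' (x, η x)) (hinv : (F' ∘L inr 𝕜 X Y).IsInvertible)
    (hinj : ∀ x, Function.Injective fun y => F (x, y)) (hη : ∀ x, F (x, η x) = z) :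
    DifferentiableAt 𝕜 η x := by
  refine (hF.hasStrictFDerivAt_implicitFunctionOfProdDomain hinv).hasFDerivAt.differentiableAt
    |>.congr_of_eventuallyEq ?_
  filter_upwards [hF.eventually_apply_implicitFunctionOfProdDomain hinv] with x' hx'
  exact hinj x' ((hη x').trans ((hη x).symm.trans hx'.symm))

theorem fderiv_comp_prod_fderiv_eq_zero {F : X × Y → Z} {η : X → Y} {z : Z} {x : X}
    (hF : DifferentiableAt 𝕜 F (x, η x)) (hηd : DifferentiableAt 𝕜 η x)
    (hη : ∀ x, F (x, η x) = z) :
    fderiv 𝕜 F (x, η x) ∘L (.prod (.id 𝕜 X) (fderiv 𝕜 η x)) = 0 := by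
  have hchain := hF.hasFDerivAt.comp x ((hasFDerivAt_id x).prodMk hηd.hasFDerivAt)
  exact hchain.unique ((hasFDerivAt_const z x).congr_of_eventuallyEq (.of_forall hη))

theorem norm_sub_le_of_comp_prod_eq_zero {A₁ A₂ : X × Y →L[𝕜] Z} {D₁ D₂ : X →L[𝕜] Y} {c : ℝ≥0}
    (hA₁ : AntilipschitzWith c (A₁ ∘L inr 𝕜 X Y)) (hD₁ : A₁ ∘L (.prod (.id 𝕜 X) D₁) = 0)
    (hD₂ : A₂ ∘L (.prod (.id 𝕜 X) D₂) = 0) :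
    ‖D₁ - D₂‖ ≤ c * ‖A₁ - A₂‖ * max 1 ‖D₂‖ := by
  refine opNorm_le_bound _ (by positivity) fun u => ?_
  have hA₁u : A₁ (u, D₁ u) = 0 := DFunLike.congr_fun hD₁ u
  have hA₂u : A₂ (u, D₂ u) = 0 := DFunLike.congr_fun hD₂ u
  have hsub : (A₁ ∘L inr 𝕜 X Y) ((D₁ - D₂) u) = (A₂ - A₁) (u, D₂ u) := by
    have hsplit : inr 𝕜 X Y ((D₁ - D₂) u) = (u, D₁ u) - (u, D₂ u) := by simp
    rw [comp_apply, hsplit, map_sub, hA₁u, sub_apply, hA₂u]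
  have hpair : ‖(u, D₂ u)‖ ≤ max 1 ‖D₂‖ * ‖u‖ := by
    rw [max_mul_of_nonneg _ _ (norm_nonneg u), one_mul]
    exact max_le_max le_rfl (D₂.le_opNorm u)
  calc ‖(D₁ - D₂) u‖ ≤ c * ‖(A₂ - A₁) (u, D₂ u)‖ := hsub ▸ bound_of_antilipschitz _ hA₁ _
    _ ≤ c * (‖A₂ - A₁‖ * (max 1 ‖D₂‖ * ‖u‖)) := by
        gcongr
        exact (le_opNorm _ _).trans (by gcongr)
    _ = c * ‖A₁ - A₂‖ * max 1 ‖D₂‖ * ‖u‖ := by rw [norm_sub_rev]; ring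

theorem lipschitzWith_fderiv_of_apply_eq_const {F : X × Y → Z} {η : X → Y} {c L M : ℝ≥0} {z : Z}
    (hFd : Differentiable 𝕜 F) (hηd : Differentiable 𝕜 η)
    (hF : ∀ x, AntilipschitzWith c fun y => F (x, y)) (hL : LipschitzWith L F)
    (hM : LipschitzWith M (fderiv 𝕜 F)) (hη : ∀ x, F (x, η x) = z) :
    LipschitzWith (c * M * max 1 (c * L) ^ 2) (fderiv 𝕜 η) := by
  have hηL : LipschitzWith (c * L) η := lipschitzWith_of_apply_eq_const hF hL hη
  refine lipschitzWith_iff_norm_sub_le.2 fun x₁ x₂ => ?_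
  have hA₁ : AntilipschitzWith c (fderivSnd 𝕜 F (x₁, η x₁)) :=
    antilipschitzWith_of_hasFDerivAt (hF x₁) (hasFDerivAt_fderivSnd (hFd _))
  have hnorm : ‖fderiv 𝕜 η x₂‖ ≤ ↑(c * L) := norm_fderiv_le_of_lipschitz 𝕜 hηL
  have hgraph : dist (x₁, η x₁) (x₂, η x₂) ≤ ↑(max 1 (c * L)) * dist x₁ x₂ :=
    (LipschitzWith.id.prodMk hηL).dist_le_mul x₁ x₂
  calc ‖fderiv 𝕜 η x₁ - fderiv 𝕜 η x₂‖
      ≤ c * ‖fderiv 𝕜 F (x₁, η x₁) - fderiv 𝕜 F (x₂, η x₂)‖ * max 1 ‖fderiv 𝕜 η x₂‖ :=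
        norm_sub_le_of_comp_prod_eq_zero hA₁ (fderiv_comp_prod_fderiv_eq_zero (hFd _) (hηd _) hη)
          (fderiv_comp_prod_fderiv_eq_zero (hFd _) (hηd _) hη)
    _ ≤ c * (M * (↑(max 1 (c * L)) * dist x₁ x₂)) * ↑(max 1 (c * L)) := by
        gcongr
        · rw [← dist_eq_norm]
          exact (hM.dist_le_mul _ _).trans (by gcongr)
        · exact max_le_max le_rfl hnorm
    _ = ↑(c * M * max 1 (c * L) ^ 2) * ‖x₁ - x₂‖ := by rw [dist_eq_norm]; push_cast; ring

end ImplicitFunction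

section StronglyMonotone

variable {Y : Type*} [NormedAddCommGroup Y] [NormedSpace ℝ Y]

/-- A map `T` into the dual space is strongly monotone with modulus `m` if
`m ‖y' - y‖² ≤ ⟨T y' - T y, y' - y⟩`. The modulus may be negative, so that every `L`-Lipschitz map
is strongly monotone with modulus `-L`. -/
def StronglyMonotone (m : ℝ) (T : Y → Y →L[ℝ] ℝ) : Prop :=
  ∀ y y', m * ‖y' - y‖ ^ 2 ≤ (T y' - T y) (y' - y)

theorem fderiv_apply_add_le_of_uniformConvexOn {s : Set Y} {φ : ℝ → ℝ} {f : Y → ℝ}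
    {f' : Y →L[ℝ] ℝ} {x y : Y} (hf : UniformConvexOn s φ f) (hx : x ∈ s) (hy : y ∈ s)
    (hf' : HasFDerivWithinAt f f' s x) : f' (y - x) + φ ‖y - x‖ ≤ f y - f x := by
  have hsegment : ∀ᶠ t : ℝ in atTop, x + t⁻¹ • (y - x) ∈ s := by
    filter_upwards [eventually_ge_atTop 1] with t ht
    exact hf.1.add_smul_sub_mem hx hy ⟨by positivity, inv_le_one_of_one_le₀ ht⟩
  have hdiff : Tendsto (fun t : ℝ => t * (f (x + t⁻¹ • (y - x)) - f x)) atTop (𝓝 (f' (y - x))) := by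
    refine hf'.lim ?_ hsegment ?_
    · simpa using (tendsto_inv_atTop_zero (𝕜 := ℝ)).smul_const (y - x)
    · refine tendsto_const_nhds.congr' ?_
      filter_upwards [eventually_ne_atTop 0] with t ht using (smul_inv_smul₀ ht _).symm
  have hmodulus : Tendsto (fun t : ℝ => (1 - t⁻¹) * φ ‖y - x‖) atTop (𝓝 (φ ‖y - x‖)) := by
    simpa using (tendsto_inv_atTop_zero.const_sub 1).mul_const (φ ‖y - x‖)
  refine le_of_tendsto (hdiff.add hmodulus) ?_
  filter_upwards [eventually_ge_atTop 1] with t ht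
  have hconv := hf.2 hx hy (sub_nonneg.2 (inv_le_one_of_one_le₀ ht))
    (by positivity : 0 ≤ t⁻¹) (sub_add_cancel 1 t⁻¹)
  have hpoint : (1 - t⁻¹) • x + t⁻¹ • y = x + t⁻¹ • (y - x) := by module
  rw [hpoint, norm_sub_rev, smul_eq_mul, smul_eq_mul] at hconv
  calc t * (f (x + t⁻¹ • (y - x)) - f x) + (1 - t⁻¹) * φ ‖y - x‖
      ≤ t * (t⁻¹ * (f y - f x - (1 - t⁻¹) * φ ‖y - x‖)) + (1 - t⁻¹) * φ ‖y - x‖ := by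
        gcongr
        linarith
    _ = f y - f x := by field_simp; ring

theorem stronglyMonotone_of_strongConvexOn {m : ℝ} {f : Y → ℝ} {f' : Y → Y →L[ℝ] ℝ}
    (hf : StrongConvexOn univ m f) (hf' : ∀ y, HasFDerivAt f (f' y) y) :
    StronglyMonotone m f' := by
  intro y y'
  have hforward := fderiv_apply_add_le_of_uniformConvexOn hf (mem_univ y) (mem_univ y')
    (hf' y).hasFDerivWithinAt
  have hbackward := fderiv_apply_add_le_of_uniformConvexOn hf (mem_univ y') (mem_univ y)
    (hf' y').hasFDerivWithinAt
  rw [norm_sub_rev, ← neg_sub y' y, map_neg] at hbackward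
  rw [sub_apply]
  linarith

theorem stronglyMonotone_neg_of_lipschitzWith {L : ℝ≥0} {T : Y → Y →L[ℝ] ℝ}
    (hT : LipschitzWith L T) : StronglyMonotone (-L) T := by
  intro y y'
  have hbound : |(T y' - T y) (y' - y)| ≤ L * ‖y' - y‖ * ‖y' - y‖ :=
    le_of_opNorm_le _ (lipschitzWith_iff_norm_sub_le.1 hT y' y) _
  linarith [neg_le_of_abs_le hbound]

namespace StronglyMonotone

variable {m n : ℝ} {S T : Y → Y →L[ℝ] ℝ}

theorem mono (hT : StronglyMonotone n T) (hmn : m ≤ n) : StronglyMonotone m T := fun y y' =>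
  (by gcongr : m * ‖y' - y‖ ^ 2 ≤ n * ‖y' - y‖ ^ 2).trans (hT y y')

theorem add (hS : StronglyMonotone m S) (hT : StronglyMonotone n T) :
    StronglyMonotone (m + n) (S + T) := by
  intro y y'
  have hST := add_le_add (hS y y') (hT y y')
  simp only [Pi.add_apply, sub_apply, add_apply] at hST ⊢
  linarith

theorem const_smul (hT : StronglyMonotone m T) {c : ℝ} (hc : 0 ≤ c) :
    StronglyMonotone (c * m) (c • T) := by
  intro y y'
  have hcT := mul_le_mul_of_nonneg_left (hT y y') hc
  simp only [Pi.smul_apply, sub_apply, smul_apply, smul_eq_mul] at hcT ⊢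
  linarith

theorem antilipschitzWith {m : ℝ≥0} (hT : StronglyMonotone m T) (hm : 0 < m) :
    AntilipschitzWith m⁻¹ T := by
  refine AntilipschitzWith.of_le_mul_dist fun y y' => ?_
  rw [dist_comm, dist_comm (T y), dist_eq_norm, dist_eq_norm, NNReal.coe_inv, inv_mul_eq_div,
    le_div_iff₀' (by exact_mod_cast hm)]
  rcases (norm_nonneg (y' - y)).eq_or_lt with hzero | hpos
  · simp [← hzero]
  refine le_of_mul_le_mul_right ?_ hpos
  calc m * ‖y' - y‖ * ‖y' - y‖ = m * ‖y' - y‖ ^ 2 := by ring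
    _ ≤ (T y' - T y) (y' - y) := hT y y'
    _ ≤ ‖T y' - T y‖ * ‖y' - y‖ := (Real.le_norm_self _).trans (le_opNorm _ _)

theorem le_of_lipschitzWith [Nontrivial Y] {L : ℝ≥0} (hT : StronglyMonotone m T)
    (hL : LipschitzWith L T) : m ≤ L := by
  obtain ⟨v, hv⟩ := exists_ne (0 : Y)
  refine le_of_mul_le_mul_right ?_ (by rw [sub_zero]; positivity : 0 < ‖v - 0‖ ^ 2)
  calc m * ‖v - 0‖ ^ 2 ≤ (T v - T 0) (v - 0) := hT 0 v
    _ ≤ L * ‖v - 0‖ * ‖v - 0‖ := (le_abs_self _).trans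
        (le_of_opNorm_le _ (lipschitzWith_iff_norm_sub_le.1 hL v 0) _)
    _ = L * ‖v - 0‖ ^ 2 := by ring

theorem le_hasFDerivAt_apply_self {T' : Y →L[ℝ] Y →L[ℝ] ℝ} {y : Y} (hT : StronglyMonotone m T)
    (hT' : HasFDerivAt T T' y) (v : Y) : m * ‖v‖ ^ 2 ≤ T' v v := by
  have hlim : Tendsto (fun t : ℝ => (t • (T (y + t⁻¹ • v) - T y)) v) atTop (𝓝 (T' v v)) :=
    ((ContinuousLinearMap.apply ℝ ℝ v).continuous.tendsto _).comp (hT'.lim_real v)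
  refine ge_of_tendsto hlim ?_
  filter_upwards [eventually_gt_atTop 0] with t ht
  have hTt := hT y (y + t⁻¹ • v)
  rw [add_sub_cancel_left, norm_smul, map_smul, Real.norm_of_nonneg (by positivity)] at hTt
  calc m * ‖v‖ ^ 2 = t ^ 2 * (m * (t⁻¹ * ‖v‖) ^ 2) := by field_simp
    _ ≤ t ^ 2 * (t⁻¹ * (T (y + t⁻¹ • v) - T y) v) := mul_le_mul_of_nonneg_left hTt (sq_nonneg t)
    _ = t * (T (y + t⁻¹ • v) - T y) v := by field_simp

end StronglyMonotone

theorem stronglyMonotone_fderivSnd_add_const_smul {X : Type*} [NormedAddCommGroup X]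
    [NormedSpace ℝ X] {f g : X × Y → ℝ} {Lf : ℝ≥0} {μ c : ℝ} (hc : 0 ≤ c)
    (hf : Differentiable ℝ f) (hfL : LipschitzWith Lf (fderiv ℝ f)) (hg : Differentiable ℝ g)
    (x : X) (hgμ : StrongConvexOn univ μ fun y => g (x, y)) :
    StronglyMonotone (-Lf + c * μ) fun y => fderivSnd ℝ (f + c • g) (x, y) := by
  rw [fderivSnd_add_const_smul hf hg]
  have hfmono : StronglyMonotone (-Lf) fun y => fderivSnd ℝ f (x, y) :=
    stronglyMonotone_neg_of_lipschitzWith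
      (((lipschitzWith_fderivSnd hfL).comp (LipschitzWith.prodMk_left x)).weaken (mul_one _).le)
  exact hfmono.add ((stronglyMonotone_of_strongConvexOn hgμ fun y =>
    hasFDerivAt_fderivSnd (hg _)).const_smul hc)

end StronglyMonotone

theorem isInvertible_of_isCoercive {Y : Type*} [NormedAddCommGroup Y] [InnerProductSpace ℝ Y]
    [CompleteSpace Y] {B : Y →L[ℝ] Y →L[ℝ] ℝ} (hB : IsCoercive B) : B.IsInvertible := by
  have hfactor : ⇑B = InnerProductSpace.toDual ℝ Y ∘ hB.continuousLinearEquivOfBilin := by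
    ext v w
    simp
  have hbij : Function.Bijective B := by
    rw [hfactor]
    exact (InnerProductSpace.toDual ℝ Y).bijective.comp hB.continuousLinearEquivOfBilin.bijective
  exact ⟨.ofBijective B (LinearMap.ker_eq_bot.2 hbij.1) (LinearMap.range_eq_top.2 hbij.2), rfl⟩

theorem nonneg_of_norm_sub_le {E F : Type*} [NormedAddCommGroup E] [Nontrivial E]
    [SeminormedAddCommGroup F] {G : E → F} {C : ℝ}
    (hG : ∀ p q, ‖G p - G q‖ ≤ C * ‖p - q‖) : 0 ≤ C := by
  obtain ⟨p, q, hpq⟩ := exists_pair_ne E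
  exact nonneg_of_mul_nonneg_left ((norm_nonneg _).trans (hG p q)) (norm_sub_pos_iff.2 hpq)

section Minimizer

-- At the default depth no norm is found on `X × Y →L[ℝ] X × Y →L[ℝ] ℝ`.
set_option maxSynthPendingDepth 3

variable {X Y : Type*} [NormedAddCommGroup X] [NormedSpace ℝ X] [CompleteSpace X]
  [NormedAddCommGroup Y] [InnerProductSpace ℝ Y] [CompleteSpace Y]

theorem differentiable_and_lipschitzWith_fderiv_of_forall_le {h : X × Y → ℝ}
    {η : X → Y} {m L M : ℝ≥0} (hm : 0 < m) (hh : ContDiff ℝ 2 h)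
    (hmono : ∀ x, StronglyMonotone m fun y => fderivSnd ℝ h (x, y))
    (hL : LipschitzWith L (fderiv ℝ h)) (hM : LipschitzWith M (fderiv ℝ (fderiv ℝ h)))
    (hmin : ∀ x y, h (x, η x) ≤ h (x, y)) :
    Differentiable ℝ η ∧ LipschitzWith (m⁻¹ * M * max 1 (m⁻¹ * L) ^ 2) (fderiv ℝ η) := by
  have hF : ContDiff ℝ 1 (fderivSnd ℝ h) := contDiff_fderivSnd hh
  have hFd : Differentiable ℝ (fderivSnd ℝ h) := hF.differentiable one_ne_zero
  have hanti : ∀ x, AntilipschitzWith m⁻¹ fun y => fderivSnd ℝ h (x, y) := fun x =>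
    (hmono x).antilipschitzWith hm
  have hcritical : ∀ x, fderivSnd ℝ h (x, η x) = 0 := fun x =>
    IsLocalMin.hasFDerivAt_eq_zero (.of_forall (hmin x))
      (hasFDerivAt_fderivSnd (hh.differentiable two_ne_zero _))
  have hinvertible : ∀ p, (fderivSnd ℝ (fderivSnd ℝ h) p).IsInvertible := fun p => by
    refine isInvertible_of_isCoercive ⟨m, hm, fun v => ?_⟩
    rw [mul_assoc, ← sq]
    exact (hmono p.1).le_hasFDerivAt_apply_self (hasFDerivAt_fderivSnd (hFd p)) v
  have hηd : Differentiable ℝ η := fun x =>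
    differentiableAt_of_apply_eq_const (hF.contDiffAt.hasStrictFDerivAt one_ne_zero)
      (hinvertible _) (fun x => (hanti x).injective) hcritical
  have hfderivd : Differentiable ℝ (fderiv ℝ h) :=
    (hh.fderiv_right (m := 1) le_rfl).differentiable one_ne_zero
  exact ⟨hηd, lipschitzWith_fderiv_of_apply_eq_const hFd hηd hanti (lipschitzWith_fderivSnd hL)
    (lipschitzWith_fderiv_fderivSnd hfderivd hM) hcritical⟩

theorem penalty_lipschitz_constant_le {lf1 lf2 lg1 lg2 μ lam : ℝ≥0} (hμ : 0 < μ) (hlam : 0 < lam)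
    (hlf1 : lf1 ≤ lam * μ / 2) (hμlg1 : μ ≤ lg1) :
    (lam * μ / 2)⁻¹ * (lf2 + lam * lg2) * max 1 ((lam * μ / 2)⁻¹ * (lf1 + lam * lg1)) ^ 2 ≤
      18 * (lg2 + lf2 / lam) * lg1 ^ 2 / μ ^ 3 := by
  have hcondition : max 1 ((lam * μ / 2)⁻¹ * (lf1 + lam * lg1)) ≤ 3 * lg1 / μ := by
    refine max_le ?_ ?_
    · rw [one_le_div hμ]
      exact hμlg1.trans (le_mul_of_one_le_left' (by norm_num))
    · calc (lam * μ / 2)⁻¹ * (lf1 + lam * lg1)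
          ≤ (lam * μ / 2)⁻¹ * (lam * lg1 / 2 + lam * lg1) := by
            gcongr
            exact hlf1.trans (by gcongr)
        _ = 3 * lg1 / μ := by field_simp; ring
  calc (lam * μ / 2)⁻¹ * (lf2 + lam * lg2) * max 1 ((lam * μ / 2)⁻¹ * (lf1 + lam * lg1)) ^ 2
      ≤ (lam * μ / 2)⁻¹ * (lf2 + lam * lg2) * (3 * lg1 / μ) ^ 2 := by gcongr
    _ = 18 * (lg2 + lf2 / lam) * lg1 ^ 2 / μ ^ 3 := by field_simp; ring

theorem differentiable_and_lipschitzWith_fderiv_penalty_minimizer [Nontrivial Y]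
    {f g : X × Y → ℝ} {η : X → Y} {lf1 lf2 lg1 lg2 μ lam : ℝ≥0} (hμ : 0 < μ) (hlam : 0 < lam)
    (hlf1 : lf1 ≤ lam * μ / 2) (hf : ContDiff ℝ 2 f) (hf1 : LipschitzWith lf1 (fderiv ℝ f))
    (hf2 : LipschitzWith lf2 (fderiv ℝ (fderiv ℝ f))) (hg : ContDiff ℝ 2 g)
    (hg1 : LipschitzWith lg1 (fderiv ℝ g)) (hg2 : LipschitzWith lg2 (fderiv ℝ (fderiv ℝ g)))
    (hsc : ∀ x, StrongConvexOn univ (μ : ℝ) fun y => g (x, y))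
    (hmin : ∀ x y, f (x, η x) + lam * g (x, η x) ≤ f (x, y) + lam * g (x, y)) :
    Differentiable ℝ η ∧
      LipschitzWith (18 * (lg2 + lf2 / lam) * lg1 ^ 2 / μ ^ 3) (fderiv ℝ η) := by
  have hfd : Differentiable ℝ f := hf.differentiable two_ne_zero
  have hgd : Differentiable ℝ g := hg.differentiable two_ne_zero
  have hfd' : Differentiable ℝ (fderiv ℝ f) :=
    (hf.fderiv_right (m := 1) le_rfl).differentiable one_ne_zero
  have hgd' : Differentiable ℝ (fderiv ℝ g) :=
    (hg.fderiv_right (m := 1) le_rfl).differentiable one_ne_zero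
  have hmono : ∀ x, StronglyMonotone ↑(lam * μ / 2) fun y =>
      fderivSnd ℝ (f + (lam : ℝ) • g) (x, y) := fun x => by
    refine (stronglyMonotone_fderivSnd_add_const_smul lam.coe_nonneg hfd hf1 hgd x (hsc x)).mono ?_
    have hlf1' := NNReal.coe_le_coe.2 hlf1
    push_cast at hlf1' ⊢
    linarith
  have hμlg1 : μ ≤ lg1 :=
    (stronglyMonotone_of_strongConvexOn (hsc 0) fun y =>
      hasFDerivAt_fderivSnd (hgd (0, y))).le_of_lipschitzWith
        (((lipschitzWith_fderivSnd hg1).comp (LipschitzWith.prodMk_left 0)).weaken (mul_one _).le)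
  have hL := lipschitzWith_fderiv_add_const_smul hfd hgd hf1 hg1 (lam : ℝ)
  have hM := lipschitzWith_fderiv_add_const_smul hfd' hgd' hf2 hg2 (lam : ℝ)
  rw [← fderiv_add_const_smul hfd hgd] at hM
  rw [NNReal.nnnorm_eq] at hL hM
  obtain ⟨hηd, hη⟩ := differentiable_and_lipschitzWith_fderiv_of_forall_le (by positivity)
    (hf.add (hg.const_smul (lam : ℝ))) hmono hL hM hmin
  exact ⟨hηd, hη.weaken (penalty_lipschitz_constant_le hμ hlam hlf1 hμlg1)⟩

-- The sup norm on `X × Y` gives `max 1 K` as the Lipschitz constant of `x ↦ (x, η x)`, hence the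
-- factor `2 * 3 ^ 2 = 18`.
theorem lagrangian_minimizer_smoothness_general
    (f g : X × Y → ℝ) (lf1 lf2 lg1 lg2 μg : ℝ) (hμg : 0 < μg)
    (hf : ContDiff ℝ 2 f) (hf1 : ∀ p q, ‖fderiv ℝ f p - fderiv ℝ f q‖ ≤ lf1 * ‖p - q‖)
    (hf2 : ∀ p q, ‖fderiv ℝ (fderiv ℝ f) p - fderiv ℝ (fderiv ℝ f) q‖ ≤ lf2 * ‖p - q‖)
    (hg : ContDiff ℝ 2 g) (hg1 : ∀ p q, ‖fderiv ℝ g p - fderiv ℝ g q‖ ≤ lg1 * ‖p - q‖)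
    (hg2 : ∀ p q, ‖fderiv ℝ (fderiv ℝ g) p - fderiv ℝ (fderiv ℝ g) q‖ ≤ lg2 * ‖p - q‖)
    (hsc : ∀ x, StrongConvexOn univ μg fun y => g (x, y))
    {lam : ℝ} (hlam : 2 * lf1 / μg < lam) {η : X → Y}
    (hmin : ∀ x y, f (x, η x) + lam * g (x, η x) ≤ f (x, y) + lam * g (x, y)) :
    Differentiable ℝ η ∧ ∀ x₁ x₂, ‖fderiv ℝ η x₁ - fderiv ℝ η x₂‖ ≤
      18 * (lg2 + lf2 / lam) * lg1 ^ 2 / μg ^ 3 * ‖x₁ - x₂‖ := by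
  rcases subsingleton_or_nontrivial X with hX | hX
  · exact ⟨fun x => (hasFDerivAt_of_subsingleton η x).differentiableAt, fun x₁ x₂ => by
      simp [Subsingleton.elim x₁ x₂]⟩
  lift lf1 to ℝ≥0 using nonneg_of_norm_sub_le hf1
  lift lf2 to ℝ≥0 using nonneg_of_norm_sub_le (G := fderiv ℝ (fderiv ℝ f)) hf2
  lift lg1 to ℝ≥0 using nonneg_of_norm_sub_le hg1
  lift lg2 to ℝ≥0 using nonneg_of_norm_sub_le (G := fderiv ℝ (fderiv ℝ g)) hg2
  lift μg to ℝ≥0 using hμg.le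
  have hlam0 : 0 < lam := lt_of_le_of_lt (by positivity) hlam
  lift lam to ℝ≥0 using hlam0.le
  rcases subsingleton_or_nontrivial Y with hY | hY
  · obtain rfl : η = 0 := Subsingleton.elim _ _
    refine ⟨differentiable_const 0, fun x₁ x₂ => ?_⟩
    rw [Subsingleton.elim (fderiv ℝ 0 x₁ : X →L[ℝ] Y) (fderiv ℝ 0 x₂), sub_self, norm_zero]
    positivity
  have hlf1 : lf1 ≤ lam * μg / 2 := by
    rw [div_lt_iff₀ hμg] at hlam
    exact NNReal.coe_le_coe.1 (by push_cast; linarith)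
  obtain ⟨hηd, hη⟩ := differentiable_and_lipschitzWith_fderiv_penalty_minimizer
    (NNReal.coe_pos.1 hμg) (NNReal.coe_pos.1 hlam0) hlf1 hf (lipschitzWith_iff_norm_sub_le.2 hf1)
    (lipschitzWith_iff_norm_sub_le.2 hf2) hg (lipschitzWith_iff_norm_sub_le.2 hg1)
    (lipschitzWith_iff_norm_sub_le.2 hg2) hsc hmin
  exact ⟨hηd, lipschitzWith_iff_norm_sub_le.1 hη⟩

end Minimizer

theorem lagrangian_minimizer_smoothness
    (dx dy : ℕ)
    (f g : EuclideanSpace ℝ (Fin dx) × EuclideanSpace ℝ (Fin dy) → ℝ)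
    (lf1 lf2 lg1 lg2 μg : ℝ)
    (hμg : 0 < μg)
    (hf : ContDiff ℝ 2 f)
    (hf1 : ∀ p q, ‖fderiv ℝ f p - fderiv ℝ f q‖ ≤ lf1 * ‖p - q‖)
    (hf2 : ∀ p q, ‖fderiv ℝ (fderiv ℝ f) p - fderiv ℝ (fderiv ℝ f) q‖ ≤ lf2 * ‖p - q‖)
    (hg : ContDiff ℝ 2 g)
    (hg1 : ∀ p q, ‖fderiv ℝ g p - fderiv ℝ g q‖ ≤ lg1 * ‖p - q‖)
    (hg2 : ∀ p q, ‖fderiv ℝ (fderiv ℝ g) p - fderiv ℝ (fderiv ℝ g) q‖ ≤ lg2 * ‖p - q‖)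
    (hsc : ∀ x, StrongConvexOn univ μg (fun y => g (x, y)))
    (ystar : EuclideanSpace ℝ (Fin dx) → EuclideanSpace ℝ (Fin dy))
    (hystar : ∀ x y, g (x, ystar x) ≤ g (x, y))
    (ystarlam : ℝ → EuclideanSpace ℝ (Fin dx) → EuclideanSpace ℝ (Fin dy))
    (hystarlam : ∀ lam x, 2 * lf1 / μg ≤ lam → ∀ y,
      f (x, ystarlam lam x) + lam * (g (x, ystarlam lam x) - g (x, ystar x)) ≤
      f (x, y) + lam * (g (x, y) - g (x, ystar x))) :
    ∀ lam : ℝ, 2 * lf1 / μg < lam →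
      Differentiable ℝ (ystarlam lam) ∧
      ∀ x₁ x₂ : EuclideanSpace ℝ (Fin dx),
        ‖fderiv ℝ (ystarlam lam) x₁ - fderiv ℝ (ystarlam lam) x₂‖ ≤
          32 * (lg2 + lf2 / lam) * lg1 ^ 2 / μg ^ 3 * ‖x₁ - x₂‖ := by
  intro lam hlam
  obtain ⟨hdiff, hbound⟩ := lagrangian_minimizer_smoothness_general f g lf1 lf2 lg1 lg2 μg hμg
    hf hf1 hf2 hg hg1 hg2 hsc hlam fun x y => by linarith [hystarlam lam x hlam.le y]
  refine ⟨hdiff, fun x₁ x₂ => ?_⟩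
  have hnonneg := (norm_nonneg _).trans (hbound x₁ x₂)
  calc ‖fderiv ℝ (ystarlam lam) x₁ - fderiv ℝ (ystarlam lam) x₂‖
      ≤ 18 * (lg2 + lf2 / lam) * lg1 ^ 2 / μg ^ 3 * ‖x₁ - x₂‖ := hbound x₁ x₂
    _ ≤ 32 / 18 * (18 * (lg2 + lf2 / lam) * lg1 ^ 2 / μg ^ 3 * ‖x₁ - x₂‖) :=
        le_mul_of_one_le_left hnonneg (by norm_num)
    _ = 32 * (lg2 + lf2 / lam) * lg1 ^ 2 / μg ^ 3 * ‖x₁ - x₂‖ := by ring
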